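/- Every Leśniewski fusion is a primitive fusion: if every y in zz satisfies P y x, and for every y with P y x there exists v in zz that overlaps y (O v y), then F zz x. -/

import Mathlib

/-- Components of `zz`: all objects that are one of some plurality fusing to a member of `zz`. -/
def Ucomp {α : Type*} (F : Set α → α → Prop) (zz : Set α) : Set α :=
  {u | ∃ z ∈ zz, ∃ yy, F yy z ∧ u ∈ yy}

/-- Parthood defined from fusion: `x` is part of `y` iff `y` fuses some plurality containing `x`. -/
def PartF {α : Type*} (F : Set α → α → Prop) (x y : α) : Prop :=
  ∃ zz, F zz y ∧ x ∈ zz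

/-- Overlap defined from the fusion-induced parthood. -/
def OvF {α : Type*} (F : Set α → α → Prop) (x y : α) : Prop :=
  ∃ z, PartF F z x ∧ PartF F z y

/-!
Under weak supplementation, a Leśniewski fusion of `zz` is a minimal upper bound of `zz`, and
composition makes every primitive fusion a Leśniewski fusion. Given a Leśniewski fusion `x` of
`zz`, let `t` be a primitive fusion of `zz` together with `x`. Then `x` is an upper bound of that
plurality and a part of `t`, so `x = t` by minimality. Hence `x` absorbs `zz`, so a primitive
fusion `s` of `zz` is a part of `x`; as `s` is also an upper bound of `zz`, minimality of `x`
gives `s = x`.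
-/

/-- The axiom (extF): pluralities with a common fusion may replace one another within a larger
plurality without affecting its fusions. -/
def FusionExt {α : Type*} (F : Set α → α → Prop) : Prop :=
  ∀ (zz yy uu : Set α) (x v : α), F zz x → F yy x → F (uu ∪ zz) v → F (uu ∪ yy) v

/-- Weak supplementation for the parthood and overlap induced by `F`, the form in which (wspF) is
used: a proper part of `y` misses some part of `y`. -/
def WeakSupplementation {α : Type*} (F : Set α → α → Prop) : Prop :=
  ∀ ⦃x y : α⦄, PartF F x y → x ≠ y → ∃ z, PartF F z y ∧ ¬ OvF F x z

/-- `x` is a Leśniewski fusion of `zz`: the members of `zz` are parts of `x`, and every part of `x`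
overlaps one of them. -/
structure IsLesniewskiFusion {α : Type*} (F : Set α → α → Prop) (zz : Set α) (x : α) : Prop where
  partF_of_mem : ∀ y ∈ zz, PartF F y x
  exists_mem_ovF : ∀ y, PartF F y x → ∃ v ∈ zz, OvF F v y

section

variable {α : Type*} {F : Set α → α → Prop} {zz : Set α} {a b c s x y : α}

theorem fusion_singleton_self (exF : ∀ zz : Set α, zz.Nonempty → ∃ y, F zz y)
    (idF : ∀ x y : α, F {y} x → x = y) (x : α) : F {x} x := by
  obtain ⟨y, hy⟩ := exF {x} (Set.singleton_nonempty x)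
  obtain rfl := idF y x hy
  exact hy

theorem PartF.refl (self : ∀ x, F {x} x) (x : α) : PartF F x x :=
  ⟨{x}, self x, rfl⟩

theorem PartF.trans (self : ∀ x, F {x} x) (ext : FusionExt F)
    (hab : PartF F a b) (hbc : PartF F b c) : PartF F a c := by
  obtain ⟨yy, hyy, ha⟩ := hab
  obtain ⟨ww, hww, hb⟩ := hbc
  have hunion : F (ww ∪ {b}) c := by
    rwa [Set.union_eq_self_of_subset_right (Set.singleton_subset_iff.2 hb)]
  exact ⟨ww ∪ yy, ext {b} yy ww b c (self b) hyy hunion, Or.inr ha⟩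

theorem OvF.of_partF_left (self : ∀ x, F {x} x) (ext : FusionExt F)
    (hov : OvF F a c) (hab : PartF F a b) : OvF F b c := by
  obtain ⟨w, hwa, hwc⟩ := hov
  exact ⟨w, hwa.trans self ext hab, hwc⟩

theorem fusion_insert_of_partF (ext : FusionExt F) (hx : F zz x) (hy : PartF F y x) :
    F (insert y zz) x := by
  obtain ⟨ww, hww, hmem⟩ := hy
  have hinsert : F (insert y ww) x := by rwa [Set.insert_eq_of_mem hmem]
  exact ext ww zz {y} x x hww hx hinsert

theorem partF_of_fusion_insert (self : ∀ x, F {x} x) (ext : FusionExt F)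
    (hs : F zz s) (hx : F (insert x zz) x) : PartF F s x :=
  ⟨{x} ∪ {s}, ext zz {s} {x} s x hs (self s) hx, Or.inr rfl⟩

theorem weakSupplementation_of_wspF (exF : ∀ zz : Set α, zz.Nonempty → ∃ y, F zz y)
    (self : ∀ x, F {x} x) (ext : FusionExt F)
    (wspF : ∀ x y : α, F ({x} ∪ {y}) y → x ≠ y →
      ∃ z ∈ Ucomp F {y}, ¬ ∃ u, F (Ucomp F {x} ∩ Ucomp F {z}) u) :
    WeakSupplementation F := by
  intro x y hxy hne
  obtain ⟨z, ⟨_, rfl, hzy⟩, hdisj⟩ :=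
    wspF x y (fusion_insert_of_partF ext (self y) hxy) hne
  refine ⟨z, hzy, fun ⟨w, hwx, hwz⟩ => hdisj ?_⟩
  exact exF _ ⟨w, ⟨x, rfl, hwx⟩, ⟨z, rfl, hwz⟩⟩

theorem isLesniewskiFusion_of_fusion (ext : FusionExt F)
    (compF : ∀ (zz : Set α) (x y : α), F (zz ∪ {x}) y → F zz y →
      ∃ vv, vv ⊆ Ucomp F zz ∧ F vv x ∧ vv.Nonempty)
    (hx : F zz x) : IsLesniewskiFusion F zz x where
  partF_of_mem _ hy := ⟨zz, hx, hy⟩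
  exists_mem_ovF y hy := by
    have hunion : F (zz ∪ {y}) x := by
      simpa only [Set.union_singleton] using fusion_insert_of_partF ext hx hy
    obtain ⟨vv, hsub, hvy, w, hw⟩ := compF zz y x hunion hx
    obtain ⟨v, hv, hwv⟩ := hsub hw
    exact ⟨v, hv, w, hwv, vv, hvy, hw⟩

theorem IsLesniewskiFusion.eq_of_upperBound_of_partF (self : ∀ x, F {x} x) (ext : FusionExt F)
    (wsp : WeakSupplementation F) (hx : IsLesniewskiFusion F zz x)
    (hub : ∀ y ∈ zz, PartF F y b) (hbx : PartF F b x) : b = x := by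
  by_contra hne
  obtain ⟨z, hzx, hdisj⟩ := wsp hbx hne
  obtain ⟨v, hv, hvz⟩ := hx.exists_mem_ovF z hzx
  exact hdisj (hvz.of_partF_left self ext (hub v hv))

theorem fusion_insert_of_upperBound (exF : ∀ zz : Set α, zz.Nonempty → ∃ y, F zz y)
    (self : ∀ x, F {x} x) (ext : FusionExt F) (wsp : WeakSupplementation F)
    (fusion_lesniewski : ∀ zz x, F zz x → IsLesniewskiFusion F zz x)
    (hub : ∀ y ∈ zz, PartF F y x) : F (insert x zz) x := by
  obtain ⟨t, ht⟩ := exF (insert x zz) (Set.insert_nonempty x zz)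
  have hub_insert : ∀ y ∈ insert x zz, PartF F y x :=
    Set.forall_mem_insert.2 ⟨PartF.refl self x, hub⟩
  have hxt : x = t := (fusion_lesniewski _ t ht).eq_of_upperBound_of_partF self ext wsp
    hub_insert ⟨_, ht, Set.mem_insert x zz⟩
  rwa [← hxt] at ht

end

theorem lesniewski_to_fusion {α : Type*} (F : Set α → α → Prop)
    (exF : ∀ zz : Set α, zz.Nonempty → ∃ y, F zz y)
    (extF : ∀ (zz yy uu : Set α) (x v : α),
      F zz x → F yy x → F (uu ∪ zz) v → F (uu ∪ yy) v)
    (idF : ∀ x y : α, F {y} x → x = y)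
    (compF : ∀ (zz : Set α) (x y : α), F (zz ∪ {x}) y → F zz y →
      ∃ vv, vv ⊆ Ucomp F zz ∧ F vv x ∧ vv.Nonempty)
    (wspF : ∀ x y : α, F ({x} ∪ {y}) y → x ≠ y →
      ∃ z ∈ Ucomp F {y}, ¬ ∃ u, F (Ucomp F {x} ∩ Ucomp F {z}) u) :
    ∀ (zz : Set α) (x : α),
      (∀ y ∈ zz, PartF F y x) → (∀ y, PartF F y x → ∃ v ∈ zz, OvF F v y) → F zz x := by
  intro zz x hpart hov
  have hx : IsLesniewskiFusion F zz x := ⟨hpart, hov⟩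
  have self := fusion_singleton_self exF idF
  have wsp := weakSupplementation_of_wspF exF self extF wspF
  have habsorb : F (insert x zz) x := fusion_insert_of_upperBound exF self extF wsp
    (fun _ _ => isLesniewskiFusion_of_fusion extF compF) hpart
  obtain ⟨v, hv, -⟩ := hov x (PartF.refl self x)
  obtain ⟨s, hs⟩ := exF zz ⟨v, hv⟩
  have hsx : s = x := hx.eq_of_upperBound_of_partF self extF wsp
    (fun _ hy => ⟨zz, hs, hy⟩) (partF_of_fusion_insert self extF hs habsorb)
  rwa [hsx] at hs
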